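/- arXiv:2309.05816 — 3 statements merged into one kernel-verified Lean document; each statement's English description precedes it below -/
import Mathlib

section
/- Let T : M → M be any mapping. Then T commutes with the probability distortion T_d for every right-continuous distortion function d ∈ F_D^R if and only if there exists an increasing left-continuous u : ℝ → ℝ such that T = T^u. -/
/-! For right-continuous `d` the distortion is plain composition, `T_d F = d ∘ F`. For `u` increasing
and left-continuous, a sublevel set `{u ≤ y}` is empty, the whole line or a ray `(-∞, s]`, so that
`T^u F y` is `0`, `1` or `F s`; since `d` fixes `0` and `1`, `T^u` commutes with `T_d`.

Conversely, apply the commutation to the step distortions `d = 1_{[p, ∞)}` with `0 < p ≤ 1`. They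
turn `F` into the point mass at its left `p`-quantile `q`, so `T` of that point mass is
`1_{[p, ∞)} ∘ T F`. Writing `u q` for the left `1`-quantile of `T δ_q`, this says that the left
`p`-quantile of `T F` is `u q` (`le_map_iff_pointU_le`). Uniform distributions, whose quantiles fill
an interval, show that `u` is increasing and left-continuous, and comparing the superlevel sets of
`T F y` and `T^u F y` over all thresholds `p` gives `T F = T^u F`. -/

open MeasureTheory Filter Topology Set

noncomputable section

/-- The set of cdfs of compactly supported probability distributions on ℝ:
increasing, right-continuous, equal to `0` for all sufficiently small `x` and
equal to `1` for all sufficiently large `x`. -/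
def mSet : Set (ℝ → ℝ) :=
  {F | Monotone F ∧ (∀ x, ContinuousWithinAt F (Set.Ici x) x) ∧
    (∃ a, ∀ x ≤ a, F x = 0) ∧ (∃ b, ∀ x, b ≤ x → F x = 1)}

/-- The set of cdfs of all probability distributions on ℝ: increasing,
right-continuous, with limit `0` at `-∞` and limit `1` at `+∞`. -/
def m0Set : Set (ℝ → ℝ) :=
  {F | Monotone F ∧ (∀ x, ContinuousWithinAt F (Set.Ici x) x) ∧
    Tendsto F atBot (𝓝 0) ∧ Tendsto F atTop (𝓝 1)}

/-- A utility function: increasing (non-strict) and continuous. -/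
def IsUF (u : ℝ → ℝ) : Prop := Monotone u ∧ Continuous u

/-- An increasing and left-continuous function on ℝ. -/
def IsLeftCtsIncr (u : ℝ → ℝ) : Prop :=
  Monotone u ∧ ∀ x, ContinuousWithinAt u (Set.Iic x) x

/-- A distortion function: an increasing function `d : [0,1] → [0,1]` with
`d 0 = 0` and `d 1 = 1` (values outside `[0,1]` are irrelevant). -/
def IsDF (d : ℝ → ℝ) : Prop :=
  MonotoneOn d (Set.Icc 0 1) ∧ d 0 = 0 ∧ d 1 = 1

/-- Right-continuity of a distortion function on `[0,1)`. -/
def DFRightCts (d : ℝ → ℝ) : Prop :=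
  ∀ x ∈ Set.Ico (0:ℝ) 1, ContinuousWithinAt d (Set.Ioi x) x

/-- A distortion function with moreover `d(0+) = 0` and `d(1-) = 1`. -/
def IsDFhat (d : ℝ → ℝ) : Prop :=
  IsDF d ∧ Tendsto d (𝓝[>] (0:ℝ)) (𝓝 0) ∧ Tendsto d (𝓝[<] (1:ℝ)) (𝓝 1)

/-- The probability distortion generated by `d`:  `T_d F x = (d ∘ F)(x+)`,
the right limit of `d ∘ F` at `x`. -/
noncomputable def distortT (d F : ℝ → ℝ) : ℝ → ℝ :=
  fun x => Function.rightLim (d ∘ F) x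

/-- The utility transform `T^u`: it maps a cdf `F` to the cdf of the
pushforward under `u` of the probability measure with cdf `F`. -/
noncomputable def utilityT (u F : ℝ → ℝ) : ℝ → ℝ := by
  classical
  exact
    if h : Monotone F ∧ ∀ x, ContinuousWithinAt F (Set.Ici x) x then
      fun x => ((StieltjesFunction.measure ⟨F, h.1, h.2⟩).map u (Set.Iic x)).toReal
    else F

/-- Left quantile `F_L^{-1}(p) = inf {x | F x ≥ p}`. -/
noncomputable def leftQ (F : ℝ → ℝ) (p : ℝ) : ℝ := sInf {x | p ≤ F x}

/-- Right quantile `F_R^{-1}(p) = inf {x | F x > p}`. -/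
noncomputable def rightQ (F : ℝ → ℝ) (p : ℝ) : ℝ := sInf {x | p < F x}

lemma mem_Icc_of_mSet {F : ℝ → ℝ} (hF : F ∈ mSet) (x : ℝ) : F x ∈ Set.Icc (0:ℝ) 1 := by
  obtain ⟨hm, -, ⟨a, ha⟩, ⟨b, hb⟩⟩ := hF
  constructor
  · rw [← ha (min a x) (min_le_left _ _)]
    exact hm (min_le_right _ _)
  · rw [← hb (max b x) (le_max_left _ _)]
    exact hm (le_max_right _ _)

lemma comp_rightCts {d F : ℝ → ℝ} (hd : IsDF d) (hr : DFRightCts d) (hF : F ∈ mSet) (x : ℝ) :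
    ContinuousWithinAt (d ∘ F) (Set.Ici x) x := by
  have hI := mem_Icc_of_mSet hF
  rcases lt_or_eq_of_le (hI x).2 with h | h
  · have h1 : ContinuousWithinAt d (Set.Ici (F x)) (F x) :=
      continuousWithinAt_Ioi_iff_Ici.1 (hr _ ⟨(hI x).1, h⟩)
    exact h1.comp (hF.2.1 x) (fun y hy => hF.1 hy)
  · -- right-continuity of `d` is not available at `1`, but `d ∘ F` is constant to the right of `x`
    have hc : ∀ y ∈ Set.Ici x, (d ∘ F) y = 1 := by
      intro y hy
      have : F y = 1 := le_antisymm (hI y).2 (h ▸ hF.1 hy)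
      simp [this, hd.2.2]
    exact continuousWithinAt_const.congr hc (hc x self_mem_Ici)

lemma distortT_eq {d F : ℝ → ℝ} (hd : IsDF d) (hr : DFRightCts d) (hF : F ∈ mSet) :
    distortT d F = d ∘ F := by
  funext x
  have h := comp_rightCts hd hr hF x
  exact rightLim_eq_of_tendsto (h.mono Set.Ioi_subset_Ici_self)

lemma comp_mem_mSet {d F : ℝ → ℝ} (hd : IsDF d) (hr : DFRightCts d) (hF : F ∈ mSet) :
    d ∘ F ∈ mSet := by
  refine ⟨fun x y hxy => hd.1 (mem_Icc_of_mSet hF x) (mem_Icc_of_mSet hF y) (hF.1 hxy),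
    comp_rightCts hd hr hF, ?_, ?_⟩
  · obtain ⟨a, ha⟩ := hF.2.2.1
    exact ⟨a, fun x hx => by simp [ha x hx, hd.2.1]⟩
  · obtain ⟨b, hb⟩ := hF.2.2.2
    exact ⟨b, fun x hx => by simp [hb x hx, hd.2.2]⟩

/-- Sublevel sets of `u` are closed lower sets: empty, the whole line, or a closed ray. -/
lemma utilityT_cases {u F : ℝ → ℝ} (hu : IsLeftCtsIncr u) (hF : F ∈ mSet) (y : ℝ) :
    ((∀ x, ¬ u x ≤ y) ∧ utilityT u F y = 0) ∨ ((∀ x, u x ≤ y) ∧ utilityT u F y = 1) ∨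
      ∃ s, (∀ x, u x ≤ y ↔ x ≤ s) ∧ utilityT u F y = F s := by
  have hval : utilityT u F y =
      ((StieltjesFunction.measure ⟨F, hF.1, hF.2.1⟩) (u ⁻¹' Set.Iic y)).toReal := by
    unfold utilityT
    rw [dif_pos ⟨hF.1, hF.2.1⟩, Measure.map_apply hu.1.measurable measurableSet_Iic]
  have hbot : Tendsto F atBot (𝓝 0) := by
    obtain ⟨a, ha⟩ := hF.2.2.1
    exact tendsto_const_nhds.congr' ((eventually_le_atBot a).mono fun x hx => (ha x hx).symm)
  have htop : Tendsto F atTop (𝓝 1) := by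
    obtain ⟨b, hb⟩ := hF.2.2.2
    exact tendsto_const_nhds.congr' ((eventually_ge_atTop b).mono fun x hx => (hb x hx).symm)
  by_cases h0 : ∀ x, ¬ u x ≤ y
  · left
    refine ⟨h0, ?_⟩
    have : u ⁻¹' Set.Iic y = ∅ := by ext x; simpa using h0 x
    rw [hval, this]; simp
  right
  by_cases h1 : ∀ x, u x ≤ y
  · left
    refine ⟨h1, ?_⟩
    have : u ⁻¹' Set.Iic y = Set.univ := by ext x; simpa using h1 x
    rw [hval, this, StieltjesFunction.measure_univ _ hbot htop]; simp
  right
  push Not at h0 h1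
  obtain ⟨a, ha⟩ := h0
  obtain ⟨b, hb⟩ := h1
  have hlt : ∀ x, u x ≤ y → x ≤ b := fun x hx => by
    by_contra! hc
    linarith [hu.1 hc.le]
  have hbdd : BddAbove {x | u x ≤ y} := ⟨b, hlt⟩
  have hsup : u (sSup {x | u x ≤ y}) ≤ y := by
    set s := sSup {x | u x ≤ y} with hs
    have hcl : s ∈ closure {x | u x ≤ y} := csSup_mem_closure ⟨a, ha⟩ hbdd
    have hsub : {x | u x ≤ y} ⊆ Set.Iic s := fun x hx => le_csSup hbdd hx
    have hcont : ContinuousWithinAt u {x | u x ≤ y} s := (hu.2 s).mono hsub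
    exact closure_minimal (fun z hz => by obtain ⟨x, hx, rfl⟩ := hz; exact hx) isClosed_Iic
      (hcont.mem_closure_image hcl)
  have hiff : ∀ x, u x ≤ y ↔ x ≤ sSup {x | u x ≤ y} := fun x =>
    ⟨fun hx => le_csSup hbdd hx, fun hx => (hu.1 hx).trans hsup⟩
  refine ⟨_, hiff, ?_⟩
  have : u ⁻¹' Set.Iic y = Set.Iic (sSup {x | u x ≤ y}) := by
    ext x; exact hiff x
  rw [hval, this, StieltjesFunction.measure_Iic _ hbot]
  simp [(mem_Icc_of_mSet hF _).1]

/-- Existence of the left quantile: superlevel sets of a cdf are closed rays `[q, ∞)`. -/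
lemma exists_quantile {F : ℝ → ℝ} (hF : F ∈ mSet) {p : ℝ} (hp : 0 < p) (hp1 : p ≤ 1) :
    ∃ q, ∀ z, p ≤ F z ↔ q ≤ z := by
  obtain ⟨a, ha⟩ := hF.2.2.1
  obtain ⟨b, hb⟩ := hF.2.2.2
  have hne : {z | p ≤ F z}.Nonempty := ⟨b, by simpa [hb b le_rfl] using hp1⟩
  have hbdd : BddBelow {z | p ≤ F z} := ⟨a, fun z hz => by
    by_contra! hc
    have hz' : p ≤ F z := hz
    linarith [ha z hc.le]⟩
  have hinf : p ≤ F (sInf {z | p ≤ F z}) := by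
    set s := sInf {z | p ≤ F z} with hs
    have hcl : s ∈ closure {z | p ≤ F z} := csInf_mem_closure hne hbdd
    have hsub : {z | p ≤ F z} ⊆ Set.Ici s := fun x hx => csInf_le hbdd hx
    have hcont : ContinuousWithinAt F {z | p ≤ F z} s := (hF.2.1 s).mono hsub
    exact closure_minimal (fun z hz => by obtain ⟨x, hx, rfl⟩ := hz; exact hx) isClosed_Ici
      (hcont.mem_closure_image hcl)
  exact ⟨_, fun z => ⟨fun hz => csInf_le hbdd hz, fun hz => hinf.trans (hF.1 hz)⟩⟩

/-- The step function `1_{[p, ∞)}`: the step distortion with threshold `p` when `0 < p ≤ 1`, and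
also the cdf of the point mass at `p`. -/
def stepFn (p : ℝ) : ℝ → ℝ := fun x => if p ≤ x then 1 else 0

lemma one_le_stepFn_iff (p x : ℝ) : 1 ≤ stepFn p x ↔ p ≤ x := by
  unfold stepFn
  split_ifs with h <;> simp [h]

lemma stepFn_monotone (p : ℝ) : Monotone (stepFn p) := by
  intro x y hxy
  unfold stepFn
  split_ifs with h1 h2
  · exact le_rfl
  · exact absurd (h1.trans hxy) h2
  · exact zero_le_one
  · exact le_rfl

lemma stepFn_rightCts (p x : ℝ) : ContinuousWithinAt (stepFn p) (Set.Ici x) x := by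
  rcases le_or_gt p x with h | h
  · have hc : ∀ y ∈ Set.Ici x, stepFn p y = 1 := fun y hy => if_pos (h.trans hy)
    exact continuousWithinAt_const.congr hc (hc x self_mem_Ici)
  · have he : stepFn p =ᶠ[𝓝 x] fun _ => (0:ℝ) := by
      filter_upwards [Iio_mem_nhds h] with y hy
      exact if_neg (not_le.2 hy)
    exact (continuousAt_const.congr he.symm).continuousWithinAt

lemma stepFn_isDF {p : ℝ} (hp : 0 < p) (hp1 : p ≤ 1) : IsDF (stepFn p) :=
  ⟨(stepFn_monotone p).monotoneOn _, if_neg (not_le.2 hp), if_pos hp1⟩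

lemma stepFn_DFRightCts (p : ℝ) : DFRightCts (stepFn p) := fun x _ =>
  (stepFn_rightCts p x).mono Set.Ioi_subset_Ici_self

lemma stepFn_mem_mSet (p : ℝ) : stepFn p ∈ mSet :=
  ⟨stepFn_monotone p, stepFn_rightCts p,
    ⟨p - 1, fun x hx => if_neg (by linarith)⟩, ⟨p, fun _ hx => if_pos hx⟩⟩

/-- The cdf of the uniform distribution on `[a, b]`, for `a < b`. -/
def unifCdf (a b : ℝ) : ℝ → ℝ := fun x => max 0 (min 1 ((x - a) / (b - a)))

lemma unifCdf_mem_mSet {a b : ℝ} (h : a < b) : unifCdf a b ∈ mSet := by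
  have hba : 0 < b - a := sub_pos.2 h
  refine ⟨?_, ?_, ⟨a, ?_⟩, ⟨b, ?_⟩⟩
  · intro x y hxy
    unfold unifCdf
    gcongr
  · intro x
    have : Continuous (unifCdf a b) := by unfold unifCdf; fun_prop
    exact this.continuousWithinAt
  · intro x hx
    have : (x - a) / (b - a) ≤ 0 := div_nonpos_of_nonpos_of_nonneg (by linarith) hba.le
    exact max_eq_left ((min_le_right _ _).trans this)
  · intro x hx
    have : 1 ≤ (x - a) / (b - a) := by rw [le_div_iff₀ hba]; linarith
    simp [unifCdf, min_eq_left this]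

lemma unifCdf_quantile {a b x : ℝ} (hax : a < x) (hxb : x ≤ b) (z : ℝ) :
    (x - a) / (b - a) ≤ unifCdf a b z ↔ x ≤ z := by
  have hba : 0 < b - a := by linarith
  have h0 : 0 < (x - a) / (b - a) := div_pos (by linarith) hba
  have h1 : (x - a) / (b - a) ≤ 1 := by rw [div_le_one hba]; linarith
  unfold unifCdf
  rw [le_max_iff, le_min_iff, div_le_div_iff_of_pos_right hba]
  constructor
  · rintro (h | h)
    · linarith
    · linarith [h.2]
  · intro h
    exact Or.inr ⟨h1, by linarith⟩

/-- `T` commutes with every probability distortion generated by a right-continuous distortion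
function. -/
def CommDistort (T : (ℝ → ℝ) → ℝ → ℝ) : Prop :=
  ∀ d : ℝ → ℝ, IsDF d → DFRightCts d → ∀ F ∈ mSet, T (distortT d F) = distortT d (T F)

/-- The utility recovered from `T`: the left `1`-quantile of the image of the point mass at `q`. -/
def pointU (T : (ℝ → ℝ) → ℝ → ℝ) (q : ℝ) : ℝ := sInf {y | 1 ≤ T (stepFn q) y}

lemma one_le_map_stepFn_iff {T : (ℝ → ℝ) → ℝ → ℝ} (hT : ∀ F ∈ mSet, T F ∈ mSet) (q y : ℝ) :
    1 ≤ T (stepFn q) y ↔ pointU T q ≤ y := by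
  obtain ⟨c, hc⟩ := exists_quantile (hT _ (stepFn_mem_mSet q)) one_pos le_rfl
  have : {y | 1 ≤ T (stepFn q) y} = Set.Ici c := by ext z; exact hc z
  rw [pointU, this, csInf_Ici]
  exact hc y

/-- `T` maps left quantiles by `pointU T`: if `q` is the left `p`-quantile of `F`, then `pointU T q`
is that of `T F`. -/
lemma le_map_iff_pointU_le {T : (ℝ → ℝ) → ℝ → ℝ} (hT : ∀ F ∈ mSet, T F ∈ mSet)
    (hcomm : CommDistort T) {F : ℝ → ℝ} (hF : F ∈ mSet) {p q : ℝ} (hp : 0 < p) (hp1 : p ≤ 1)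
    (hq : ∀ z, p ≤ F z ↔ q ≤ z) (y : ℝ) : p ≤ T F y ↔ pointU T q ≤ y := by
  have hd := stepFn_isDF hp hp1
  have hr := stepFn_DFRightCts p
  have h := hcomm _ hd hr F hF
  rw [distortT_eq hd hr hF, distortT_eq hd hr (hT F hF)] at h
  have hstep : stepFn p ∘ F = stepFn q := by
    funext z
    simp [stepFn, hq z]
  rw [hstep] at h
  rw [← one_le_map_stepFn_iff hT, h, Function.comp_apply, one_le_stepFn_iff]

lemma pointU_isLeftCtsIncr {T : (ℝ → ℝ) → ℝ → ℝ} (hT : ∀ F ∈ mSet, T F ∈ mSet)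
    (hcomm : CommDistort T) : IsLeftCtsIncr (pointU T) := by
  have key : ∀ a b x : ℝ, a < x → x ≤ b → ∀ y,
      (x - a) / (b - a) ≤ T (unifCdf a b) y ↔ pointU T x ≤ y := by
    intro a b x hax hxb y
    have hba : 0 < b - a := by linarith
    exact le_map_iff_pointU_le hT hcomm (unifCdf_mem_mSet (by linarith))
      (div_pos (by linarith) hba) (by rw [div_le_one hba]; linarith) (unifCdf_quantile hax hxb) y
  have hmono : Monotone (pointU T) := by
    intro x y hxy
    rw [← key (x - 1) y x (by linarith) hxy]
    refine le_trans ?_ ((key (x - 1) y y (by linarith) le_rfl _).2 le_rfl)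
    have : 0 < y - (x - 1) := by linarith
    gcongr
  refine ⟨hmono, fun x => ?_⟩
  refine tendsto_order.2 ⟨fun c hc => ?_, fun c hc => ?_⟩
  · -- If `u z ≤ c` held for all `z < x`, then `T` of the uniform cdf on `[x - 1, x]` would be at
    -- least `z - (x - 1)` at `c` for all such `z`, hence at least `1` there, forcing `u x ≤ c`.
    have hex : ∃ z, x - 1 < z ∧ z < x ∧ c < pointU T z := by
      by_contra! hno
      refine absurd ((key (x - 1) x x (by linarith) le_rfl c).1 ?_) (not_le.2 hc)
      have h1 : (x - (x - 1)) / (x - (x - 1)) = 1 := by ring_nf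
      rw [h1]
      refine le_of_forall_lt fun p hp => ?_
      obtain ⟨r, hr, hr1⟩ := exists_between (max_lt hp one_pos)
      have hr0 : 0 < r := (le_max_right _ _).trans_lt hr
      have hpr : p < r := (le_max_left _ _).trans_lt hr
      have := (key (x - 1) x (x - 1 + r) (by linarith) (by linarith) c).2
        (hno _ (by linarith) (by linarith))
      have h2 : (x - 1 + r - (x - 1)) / (x - (x - 1)) = r := by ring_nf
      rw [h2] at this
      linarith
    obtain ⟨z, -, hzx, hz⟩ := hex
    filter_upwards [mem_nhdsWithin_of_mem_nhds (Ioi_mem_nhds hzx)] with w hw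
    exact hz.trans_le (hmono (le_of_lt hw))
  · filter_upwards [self_mem_nhdsWithin] with w hw
    exact (hmono hw).trans_lt hc

lemma map_eq_utilityT {T : (ℝ → ℝ) → ℝ → ℝ} (hT : ∀ F ∈ mSet, T F ∈ mSet)
    (hcomm : CommDistort T) {F : ℝ → ℝ} (hF : F ∈ mSet) : T F = utilityT (pointU T) F := by
  funext y
  have hI := mem_Icc_of_mSet (hT F hF) y
  have hle : ∀ p, 0 < p → p ≤ 1 → ∃ q, (∀ z, p ≤ F z ↔ q ≤ z) ∧
      (p ≤ T F y ↔ pointU T q ≤ y) := fun p hp hp1 => by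
    obtain ⟨q, hq⟩ := exists_quantile hF hp hp1
    exact ⟨q, hq, le_map_iff_pointU_le hT hcomm hF hp hp1 hq y⟩
  rcases utilityT_cases (pointU_isLeftCtsIncr hT hcomm) hF y with ⟨h, hv⟩ | ⟨h, hv⟩ | ⟨s, h, hv⟩
  · rw [hv]
    refine le_antisymm ?_ hI.1
    by_contra! hc
    obtain ⟨q, -, hq⟩ := hle _ hc hI.2
    exact h q (hq.1 le_rfl)
  · rw [hv]
    obtain ⟨q, -, hq⟩ := hle 1 one_pos le_rfl
    exact le_antisymm hI.2 (hq.2 (h q))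
  · rw [hv]
    have hs := mem_Icc_of_mSet hF s
    apply le_antisymm
    · rcases hI.1.eq_or_lt with h0 | h0
      · rw [← h0]; exact hs.1
      · obtain ⟨q, hz, hq⟩ := hle _ h0 hI.2
        exact (hz s).2 ((h q).1 (hq.1 le_rfl))
    · rcases hs.1.eq_or_lt with h0 | h0
      · rw [← h0]; exact hI.1
      · obtain ⟨q, hz, hq⟩ := hle _ h0 hs.2
        exact hq.2 ((h q).2 ((hz s).1 le_rfl))

/-- A map `T : M → M` commutes with the probability distortion `T_d` for every
right-continuous distortion function `d` if and only if `T = T^u` for some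
increasing left-continuous `u : ℝ → ℝ`. -/
theorem stmt7 (T : (ℝ → ℝ) → ℝ → ℝ) (hT : ∀ F ∈ mSet, T F ∈ mSet) :
    (∀ d : ℝ → ℝ, IsDF d → DFRightCts d → ∀ F ∈ mSet,
        T (distortT d F) = distortT d (T F)) ↔
      ∃ u : ℝ → ℝ, IsLeftCtsIncr u ∧ ∀ F ∈ mSet, T F = utilityT u F := by
  constructor
  · intro hcomm
    exact ⟨pointU T, pointU_isLeftCtsIncr hT hcomm, fun F hF => map_eq_utilityT hT hcomm hF⟩
  · rintro ⟨u, hu, hTu⟩ d hd hr F hF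
    have hdF := comp_mem_mSet hd hr hF
    rw [distortT_eq hd hr hF, distortT_eq hd hr (hT F hF), hTu _ hdF, hTu _ hF]
    funext y
    rw [Function.comp_apply]
    rcases utilityT_cases hu hF y with ⟨h, hv⟩ | ⟨h, hv⟩ | ⟨s, h, hv⟩ <;>
    rcases utilityT_cases hu hdF y with ⟨h', hv'⟩ | ⟨h', hv'⟩ | ⟨s', h', hv'⟩
    · rw [hv, hv', hd.2.1]
    · exact absurd (h' 0) (h 0)
    · exact absurd ((h' s').2 le_rfl) (h s')
    · exact absurd (h 0) (h' 0)
    · rw [hv, hv', hd.2.2]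
    · linarith [(h' (s' + 1)).1 (h (s' + 1))]
    · exact absurd ((h s).2 le_rfl) (h' s)
    · linarith [(h (s + 1)).1 (h' (s + 1))]
    · have hss : s' = s := le_antisymm ((h s').1 ((h' s').2 le_rfl)) ((h' s).1 ((h s).2 le_rfl))
      rw [hv, hv', hss, Function.comp_apply]
end
end

section
/- Let T : M₀ → M₀ be any mapping on the set of all probability distributions on ℝ. Then T commutes with the utility transform T^u for every utility function u ∈ F_U if and only if there exists a distortion function d ∈ F̂_D (i.e., d ∈ F_D with additionally d(0+)=0 and d(1−)=1) such that T = T_d. -/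
/-!
Everything rests on one description of `utilityT u F`: for `F ∈ m0Set` its value at `x` is the mass
that `F` gives to `{u ≤ x}`, and for monotone continuous `u` this set is empty, all of `ℝ`, or a
half-line `Iic a`, so the value is `0`, `1` or `F a`.

*Distortions commute.* Put `G = utilityT u F` and `K = utilityT u (distortT d F)`. For `x < y` one
has `K x ≤ d (G y) ≤ K y`, because `distortT d F` is the right limit of `d ∘ F` and, by continuity
of `u`, the half-line `{u ≤ y}` is strictly larger than `{u ≤ x}`. Right-continuity of `K` then
identifies the right limit of `d ∘ G` with `K`.

*Commuting maps are distortions.* Let `d p` be the value at `0` of the image under `T` of the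
two-point law with mass `p` at `0` and `1 - p` at `1`. Given `F` and `x`, cut `F` open at `x`: shift
the mass on `(x, ∞)` by one to the right, giving a cdf `F'` that is flat on `[x, x + 1)`. A
continuous utility that collapses the gap recovers `F` from `F'`, whereas the utility that rises
from `0` to `1` across the gap turns `F'` into the two-point law with parameter `F x`. Commutation
with these two utilities yields `T F t = T F' t` for `t < x`, `T F x = T F' (x + 1)` and
`d (F x) = T F' x`, whence the sandwich `T F t ≤ d (F x) ≤ T F x` for `t < x`
(`apply_le_twoPointDF`, `twoPointDF_le_apply`). Right-continuity of `T F` gives `T F = distortT d F`.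
The sandwich for the uniform law shows that `d` is a distortion function, and the sandwich for the
logistic law, whose cdf stays in `(0, 1)`, shows `d(0+) = 0` and `d(1-) = 1`.
-/

open MeasureTheory Filter Topology Set

noncomputable section

/-! ### Cdfs and their pushforwards -/

/-- The probability measure on `ℝ` with cdf `F`. -/
def cdfMeasure {F : ℝ → ℝ} (hF : F ∈ m0Set) : Measure ℝ :=
  StieltjesFunction.measure ⟨F, hF.1, hF.2.1⟩

instance cdfMeasure_isProb {F : ℝ → ℝ} (hF : F ∈ m0Set) :
    IsProbabilityMeasure (cdfMeasure hF) :=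
  StieltjesFunction.isProbabilityMeasure _ hF.2.2.1 hF.2.2.2

lemma m0_mem_Icc {F : ℝ → ℝ} (hF : F ∈ m0Set) (x : ℝ) : F x ∈ Icc (0:ℝ) 1 :=
  ⟨hF.1.le_of_tendsto hF.2.2.1 x, hF.1.ge_of_tendsto hF.2.2.2 x⟩

lemma cdfMeasure_Iic {F : ℝ → ℝ} (hF : F ∈ m0Set) (x : ℝ) :
    (cdfMeasure hF (Iic x)).toReal = F x := by
  have h := StieltjesFunction.measure_Iic ⟨F, hF.1, hF.2.1⟩ hF.2.2.1 x
  rw [cdfMeasure, h, sub_zero]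
  exact ENNReal.toReal_ofReal (m0_mem_Icc hF x).1

lemma utilityT_apply {u F : ℝ → ℝ} (hu : Measurable u) (hF : F ∈ m0Set) (x : ℝ) :
    utilityT u F x = (cdfMeasure hF (u ⁻¹' Iic x)).toReal := by
  have h : Monotone F ∧ ∀ x, ContinuousWithinAt F (Set.Ici x) x := ⟨hF.1, hF.2.1⟩
  rw [utilityT, dif_pos h, Measure.map_apply hu measurableSet_Iic]
  rfl

lemma utilityT_of_empty {u F : ℝ → ℝ} (hu : Measurable u) (hF : F ∈ m0Set) {x : ℝ}
    (h : u ⁻¹' Iic x = ∅) : utilityT u F x = 0 := by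
  simp [utilityT_apply hu hF, h]

lemma utilityT_of_univ {u F : ℝ → ℝ} (hu : Measurable u) (hF : F ∈ m0Set) {x : ℝ}
    (h : u ⁻¹' Iic x = univ) : utilityT u F x = 1 := by
  simp [utilityT_apply hu hF, h]

lemma utilityT_of_Iic {u F : ℝ → ℝ} (hu : Measurable u) (hF : F ∈ m0Set) {x a : ℝ}
    (h : u ⁻¹' Iic x = Iic a) : utilityT u F x = F a := by
  rw [utilityT_apply hu hF, h, cdfMeasure_Iic]

lemma utilityT_eq_cdf {u F : ℝ → ℝ} (hu : Measurable u) (hF : F ∈ m0Set) :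
    utilityT u F = ProbabilityTheory.cdf ((cdfMeasure hF).map u) := by
  have : IsProbabilityMeasure ((cdfMeasure hF).map u) :=
    Measure.isProbabilityMeasure_map hu.aemeasurable
  ext x
  rw [ProbabilityTheory.cdf_eq_real, utilityT_apply hu hF, measureReal_def,
    Measure.map_apply hu measurableSet_Iic]

lemma utilityT_mem {u F : ℝ → ℝ} (hu : Measurable u) (hF : F ∈ m0Set) :
    utilityT u F ∈ m0Set := by
  rw [utilityT_eq_cdf hu hF]
  exact ⟨ProbabilityTheory.monotone_cdf _, fun x => StieltjesFunction.right_continuous _ x,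
    ProbabilityTheory.tendsto_cdf_atBot _, ProbabilityTheory.tendsto_cdf_atTop _⟩

lemma cdfMeasure_utilityT {u F : ℝ → ℝ} (hu : Measurable u) (hF : F ∈ m0Set) :
    cdfMeasure (utilityT_mem hu hF) = (cdfMeasure hF).map u := by
  have : IsProbabilityMeasure ((cdfMeasure hF).map u) :=
    Measure.isProbabilityMeasure_map hu.aemeasurable
  rw [← ProbabilityTheory.measure_cdf ((cdfMeasure hF).map u), cdfMeasure]
  congr 1
  ext x
  exact congrFun (utilityT_eq_cdf hu hF) x

lemma utilityT_comp {u v F : ℝ → ℝ} (hu : Measurable u) (hv : Measurable v) (hF : F ∈ m0Set) :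
    utilityT u (utilityT v F) = utilityT (u ∘ v) F := by
  ext x
  rw [utilityT_apply hu (utilityT_mem hv hF), cdfMeasure_utilityT hv hF,
    Measure.map_apply hv (hu measurableSet_Iic), utilityT_apply (hu.comp hv) hF, preimage_comp]

/-- The sublevel sets of a utility function are closed lower sets of `ℝ`. -/
lemma sublevel_cases {u : ℝ → ℝ} (hu : IsUF u) (x : ℝ) :
    u ⁻¹' Iic x = ∅ ∨ u ⁻¹' Iic x = univ ∨ ∃ a, u ⁻¹' Iic x = Iic a := by
  rcases eq_empty_or_nonempty (u ⁻¹' Iic x) with h | h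
  · exact Or.inl h
  right
  by_cases hb : BddAbove (u ⁻¹' Iic x)
  · right
    have hmem := (isClosed_Iic.preimage hu.2).csSup_mem h hb
    exact ⟨sSup (u ⁻¹' Iic x), Subset.antisymm (fun y hy => le_csSup hb hy)
      fun y hy => (hu.1 hy).trans hmem⟩
  · left
    refine eq_univ_of_forall fun y => ?_
    obtain ⟨z, hz, hyz⟩ := not_bddAbove_iff.1 hb y
    exact (hu.1 hyz.le).trans hz

/-! ### Distortions commute with utility transforms -/

lemma distort_commutes {d u F : ℝ → ℝ} (hd : IsDF d) (hu : IsUF u) (hF : F ∈ m0Set)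
    (hH : distortT d F ∈ m0Set) :
    distortT d (utilityT u F) = utilityT u (distortT d F) := by
  have hum := hu.2.measurable
  have hG := utilityT_mem hum hF
  have hK := utilityT_mem hum hH
  have hdF : Monotone (d ∘ F) := fun a b hab =>
    hd.1 (m0_mem_Icc hF a) (m0_mem_Icc hF b) (hF.1 hab)
  have hd0 : ∀ p ∈ Icc (0:ℝ) 1, 0 ≤ d p := fun p hp =>
    hd.2.1.symm.le.trans (hd.1 ⟨le_rfl, zero_le_one⟩ hp hp.1)
  have upper : ∀ y, d (utilityT u F y) ≤ utilityT u (distortT d F) y := by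
    intro y
    rcases sublevel_cases hu y with h | h | ⟨a, h⟩
    · rw [utilityT_of_empty hum hF h, utilityT_of_empty hum hH h, hd.2.1]
    · rw [utilityT_of_univ hum hF h, utilityT_of_univ hum hH h, hd.2.2]
    · rw [utilityT_of_Iic hum hF h, utilityT_of_Iic hum hH h]
      exact hdF.le_rightLim le_rfl
  have lower : ∀ x y, x < y → utilityT u (distortT d F) x ≤ d (utilityT u F y) := by
    intro x y hxy
    rcases sublevel_cases hu x with h | h | ⟨a, h⟩
    · rw [utilityT_of_empty hum hH h]
      exact hd0 _ (m0_mem_Icc hG y)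
    · have h' : u ⁻¹' Iic y = univ :=
        eq_univ_of_univ_subset (h ▸ preimage_mono (Iic_subset_Iic.2 hxy.le))
      rw [utilityT_of_univ hum hF h', utilityT_of_univ hum hH h, hd.2.2]
    · have hua : u a < y := lt_of_le_of_lt (h.symm ▸ (le_refl a : a ∈ Iic a) : a ∈ u ⁻¹' Iic x) hxy
      rcases sublevel_cases hu y with h' | h' | ⟨b, h'⟩
      · exact absurd (show a ∈ u ⁻¹' Iic y from hua.le) (by simp [h'])
      · rw [utilityT_of_univ hum hF h', hd.2.2]
        exact (m0_mem_Icc hK x).2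
      · rw [utilityT_of_Iic hum hF h', utilityT_of_Iic hum hH h]
        -- `u < y` persists slightly to the right of `a`, so `{u ≤ y}` reaches beyond `a`.
        have hab : a < b := by
          have hev : ∀ᶠ z in 𝓝[>] a, u z < y :=
            (hu.2.continuousAt.eventually_lt_const hua).filter_mono nhdsWithin_le_nhds
          obtain ⟨z, hz, haz⟩ := (hev.and self_mem_nhdsWithin).exists
          have : z ∈ Iic b := h' ▸ (show z ∈ u ⁻¹' Iic y from hz.le)
          exact lt_of_lt_of_le haz this
        exact hdF.rightLim_le hab
  ext x
  refine rightLim_eq_of_tendsto ?_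
  refine tendsto_of_tendsto_of_tendsto_of_le_of_le' tendsto_const_nhds
    ((hK.2.1 x).mono_left (nhdsWithin_mono x Ioi_subset_Ici_self)) ?_ ?_
  · filter_upwards [self_mem_nhdsWithin] with y hy using lower x y hy
  · exact Eventually.of_forall upper

/-! ### The distortion function of a commuting map -/

/-- The cdf of the uniform distribution on `[0,1]`. -/
def uniformCdf (x : ℝ) : ℝ := max 0 (min x 1)

lemma uniformCdf_of_mem {p : ℝ} (hp : p ∈ Icc (0:ℝ) 1) : uniformCdf p = p := by
  rw [uniformCdf, min_eq_left hp.2, max_eq_right hp.1]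

lemma uniformCdf_of_nonpos {x : ℝ} (hx : x ≤ 0) : uniformCdf x = 0 :=
  max_eq_left ((min_le_left _ _).trans hx)

lemma uniformCdf_of_one_le {x : ℝ} (hx : 1 ≤ x) : uniformCdf x = 1 := by
  rw [uniformCdf, min_eq_right hx, max_eq_right zero_le_one]

lemma uniformCdf_isUF : IsUF uniformCdf :=
  ⟨fun _ _ h => max_le_max le_rfl (min_le_min h le_rfl), by unfold uniformCdf; fun_prop⟩

lemma uniformCdf_mem : uniformCdf ∈ m0Set := by
  refine ⟨uniformCdf_isUF.1, fun x => uniformCdf_isUF.2.continuousWithinAt, ?_, ?_⟩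
  · refine tendsto_const_nhds.congr' ?_
    filter_upwards [eventually_le_atBot 0] with x hx using (uniformCdf_of_nonpos hx).symm
  · refine tendsto_const_nhds.congr' ?_
    filter_upwards [eventually_ge_atTop 1] with x hx using (uniformCdf_of_one_le hx).symm

lemma sigmoid_mem : Real.sigmoid ∈ m0Set :=
  ⟨Real.sigmoid_monotone, fun _ => continuous_sigmoid.continuousWithinAt,
    Real.tendsto_sigmoid_atBot, Real.tendsto_sigmoid_atTop⟩

/-- The indicator of `(x, ∞)`. -/
def stepAt (x t : ℝ) : ℝ := if t ≤ x then 0 else 1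

lemma stepAt_measurable (x : ℝ) : Measurable (stepAt x) :=
  Measurable.ite measurableSet_Iic measurable_const measurable_const

/-- The map that opens a gap of length one immediately to the right of `x`. -/
def openGap (x t : ℝ) : ℝ := if t ≤ x then t else t + 1

lemma openGap_measurable (x : ℝ) : Measurable (openGap x) :=
  Measurable.ite measurableSet_Iic measurable_id (measurable_id.add_const 1)

/-- The utility function that collapses `[x, x + 1]` to `x`, inverting `openGap x`. -/
def closeGap (x t : ℝ) : ℝ := max (min t x) (t - 1)

lemma closeGap_isUF (x : ℝ) : IsUF (closeGap x) :=
  ⟨fun _ _ h => max_le_max (min_le_min h le_rfl) (by linarith), by unfold closeGap; fun_prop⟩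

lemma closeGap_comp_openGap (x : ℝ) : closeGap x ∘ openGap x = id := by
  ext t
  simp only [Function.comp, closeGap, openGap, id]
  split_ifs with h
  · rw [min_eq_left h]; exact max_eq_left (by linarith)
  · rw [min_eq_right (by linarith)]
    rw [max_eq_right] <;> linarith

/-- The utility function that rises linearly from `0` to `1` over `[x, x + 1]`. -/
def ramp (x t : ℝ) : ℝ := uniformCdf (t - x)

lemma ramp_isUF (x : ℝ) : IsUF (ramp x) :=
  ⟨fun _ _ h => uniformCdf_isUF.1 (by linarith),
    uniformCdf_isUF.2.comp (continuous_id.sub continuous_const)⟩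

lemma ramp_comp_openGap (x : ℝ) : ramp x ∘ openGap x = stepAt x := by
  ext t
  simp only [Function.comp, ramp, openGap, stepAt]
  split_ifs with h
  · exact uniformCdf_of_nonpos (by linarith)
  · exact uniformCdf_of_one_le (by linarith)

/-- The law of the indicator of `(x, ∞)` under `F` is the two-point law with mass `F x` at `0`,
so it depends on `F` and `x` only through `F x`. -/
lemma utilityT_stepAt {F G : ℝ → ℝ} (hF : F ∈ m0Set) (hG : G ∈ m0Set) {x y : ℝ}
    (h : F x = G y) : utilityT (stepAt x) F = utilityT (stepAt y) G := by
  ext t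
  rcases lt_or_ge t 0 with ht | ht
  · have key : ∀ z, stepAt z ⁻¹' Iic t = ∅ := fun z => by
      ext s
      simp only [stepAt, mem_preimage, mem_Iic, mem_empty_iff_false, iff_false]
      split_ifs <;> linarith
    rw [utilityT_of_empty (stepAt_measurable x) hF (key x),
      utilityT_of_empty (stepAt_measurable y) hG (key y)]
  rcases lt_or_ge t 1 with ht1 | ht1
  · have key : ∀ z, stepAt z ⁻¹' Iic t = Iic z := fun z => by
      ext s
      simp only [stepAt, mem_preimage, mem_Iic]
      split_ifs with hs
      · exact ⟨fun _ => hs, fun _ => ht⟩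
      · exact ⟨fun h => absurd h (by linarith), fun h => absurd h hs⟩
    rw [utilityT_of_Iic (stepAt_measurable x) hF (key x),
      utilityT_of_Iic (stepAt_measurable y) hG (key y), h]
  · have key : ∀ z, stepAt z ⁻¹' Iic t = univ := fun z => by
      ext s
      simp only [stepAt, mem_preimage, mem_Iic, mem_univ, iff_true]
      split_ifs <;> linarith
    rw [utilityT_of_univ (stepAt_measurable x) hF (key x),
      utilityT_of_univ (stepAt_measurable y) hG (key y)]

/-- The property that `T` commutes with all utility transforms. -/
def CommutesUF (T : (ℝ → ℝ) → ℝ → ℝ) : Prop :=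
  ∀ u : ℝ → ℝ, IsUF u → ∀ F ∈ m0Set, T (utilityT u F) = utilityT u (T F)

/-- The candidate distortion function of `T`: for `p ∈ [0,1]`, the value at `0` of the image under
`T` of the two-point law with mass `p` at `0` and `1 - p` at `1`. That law is realized as the
distribution of the indicator of `(p, ∞)` under the uniform law. -/
def twoPointDF (T : (ℝ → ℝ) → ℝ → ℝ) (p : ℝ) : ℝ :=
  T (utilityT (stepAt p) uniformCdf) 0

section Commuting

variable {T : (ℝ → ℝ) → ℝ → ℝ} {F : ℝ → ℝ}

lemma twoPointDF_eq (hT : ∀ F ∈ m0Set, T F ∈ m0Set) (hc : CommutesUF T) (hF : F ∈ m0Set) (x : ℝ) :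
    twoPointDF T (F x) = T (utilityT (openGap x) F) x := by
  have hF' := utilityT_mem (openGap_measurable x) hF
  have hpre : ramp x ⁻¹' Iic 0 = Iic x := by
    ext t
    simp only [ramp, uniformCdf, mem_preimage, mem_Iic, max_le_iff, min_le_iff]
    constructor
    · rintro ⟨-, h | h⟩ <;> linarith
    · intro h
      exact ⟨le_rfl, Or.inl (by linarith)⟩
  rw [twoPointDF, ← utilityT_stepAt hF uniformCdf_mem (uniformCdf_of_mem (m0_mem_Icc hF x)).symm,
    ← ramp_comp_openGap, ← utilityT_comp (ramp_isUF x).2.measurable (openGap_measurable x) hF,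
    hc _ (ramp_isUF x) _ hF', utilityT_of_Iic (ramp_isUF x).2.measurable (hT _ hF') hpre]

lemma apply_eq_closeGap (hc : CommutesUF T) (hF : F ∈ m0Set) (x : ℝ) :
    T F = utilityT (closeGap x) (T (utilityT (openGap x) F)) := by
  have hid : utilityT id F = F := by
    ext t
    exact utilityT_of_Iic measurable_id hF rfl
  rw [← hc _ (closeGap_isUF x) _ (utilityT_mem (openGap_measurable x) hF),
    utilityT_comp (closeGap_isUF x).2.measurable (openGap_measurable x) hF,
    closeGap_comp_openGap, hid]

lemma twoPointDF_le_apply (hT : ∀ F ∈ m0Set, T F ∈ m0Set) (hc : CommutesUF T) (hF : F ∈ m0Set)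
    (x : ℝ) : twoPointDF T (F x) ≤ T F x := by
  have hF' := utilityT_mem (openGap_measurable x) hF
  have hpre : closeGap x ⁻¹' Iic x = Iic (x + 1) := by
    ext t
    simp only [closeGap, mem_preimage, mem_Iic, max_le_iff, min_le_iff]
    constructor
    · rintro ⟨-, h⟩; linarith
    · intro h
      exact ⟨Or.inr le_rfl, by linarith⟩
  rw [twoPointDF_eq hT hc hF, apply_eq_closeGap hc hF x,
    utilityT_of_Iic (closeGap_isUF x).2.measurable (hT _ hF') hpre]
  exact (hT _ hF').1 (by linarith)

lemma apply_le_twoPointDF (hT : ∀ F ∈ m0Set, T F ∈ m0Set) (hc : CommutesUF T) (hF : F ∈ m0Set)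
    {t x : ℝ} (htx : t < x) : T F t ≤ twoPointDF T (F x) := by
  have hF' := utilityT_mem (openGap_measurable x) hF
  have hpre : closeGap x ⁻¹' Iic t = Iic t := by
    ext s
    simp only [closeGap, mem_preimage, mem_Iic, max_le_iff, min_le_iff]
    constructor
    · rintro ⟨h | h, -⟩ <;> linarith
    · intro h
      exact ⟨Or.inl h, by linarith⟩
  rw [twoPointDF_eq hT hc hF, apply_eq_closeGap hc hF x,
    utilityT_of_Iic (closeGap_isUF x).2.measurable (hT _ hF') hpre]
  exact (hT _ hF').1 htx.le

lemma twoPointDF_isDF (hT : ∀ F ∈ m0Set, T F ∈ m0Set) (hc : CommutesUF T) :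
    IsDF (twoPointDF T) := by
  have hU := uniformCdf_mem
  have hTU := hT _ hU
  have hmem : ∀ p, twoPointDF T p ∈ Icc (0:ℝ) 1 := fun p =>
    m0_mem_Icc (hT _ (utilityT_mem (stepAt_measurable p) hU)) 0
  refine ⟨?_, ?_, ?_⟩
  · intro p hp q hq hpq
    rcases hpq.eq_or_lt with rfl | hlt
    · exact le_rfl
    have h1 := twoPointDF_le_apply hT hc hU p
    have h2 := apply_le_twoPointDF hT hc hU hlt
    rw [uniformCdf_of_mem hp] at h1
    rw [uniformCdf_of_mem hq] at h2
    exact h1.trans h2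
  · refine le_antisymm (ge_of_tendsto hTU.2.2.1 ?_) (hmem 0).1
    filter_upwards [eventually_le_atBot 0] with x hx
    have h := twoPointDF_le_apply hT hc hU x
    rwa [uniformCdf_of_nonpos hx] at h
  · refine le_antisymm (hmem 1).2 (le_of_tendsto hTU.2.2.2 ?_)
    filter_upwards [eventually_ge_atTop 0] with x hx
    have h := apply_le_twoPointDF hT hc hU (lt_add_one x)
    rwa [uniformCdf_of_one_le (by linarith)] at h

lemma twoPointDF_isDFhat (hT : ∀ F ∈ m0Set, T F ∈ m0Set) (hc : CommutesUF T) :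
    IsDFhat (twoPointDF T) := by
  have hd := twoPointDF_isDF hT hc
  have hS := sigmoid_mem
  have hTS := hT _ hS
  refine ⟨hd, ?_, ?_⟩
  · rw [tendsto_order]
    constructor
    · intro a ha
      filter_upwards [Ioo_mem_nhdsGT (zero_lt_one' ℝ)] with p hp
      have h := hd.1 ⟨le_rfl, zero_le_one⟩ ⟨hp.1.le, hp.2.le⟩ hp.1.le
      rw [hd.2.1] at h
      exact ha.trans_le h
    · intro a ha
      obtain ⟨x, hx⟩ := (hTS.2.2.1.eventually_lt_const ha).exists
      filter_upwards [Ioo_mem_nhdsGT (Real.sigmoid_pos x)] with p hp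
      have h1 := Real.sigmoid_lt_one x
      exact ((hd.1 ⟨hp.1.le, (hp.2.trans h1).le⟩ (m0_mem_Icc hS x) hp.2.le).trans
        (twoPointDF_le_apply hT hc hS x)).trans_lt hx
  · rw [tendsto_order]
    constructor
    · intro a ha
      obtain ⟨x, hx⟩ := (hTS.2.2.2.eventually_const_lt ha).exists
      filter_upwards [Ioo_mem_nhdsLT (Real.sigmoid_lt_one (x + 1))] with p hp
      have h1 := Real.sigmoid_pos (x + 1)
      exact hx.trans_le ((apply_le_twoPointDF hT hc hS (lt_add_one x)).trans
        (hd.1 (m0_mem_Icc hS _) ⟨(h1.trans hp.1).le, hp.2.le⟩ hp.1.le))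
    · intro a ha
      filter_upwards [Ioo_mem_nhdsLT (zero_lt_one' ℝ)] with p hp
      have h := hd.1 ⟨hp.1.le, hp.2.le⟩ ⟨zero_le_one, le_rfl⟩ hp.2.le
      rw [hd.2.2] at h
      exact h.trans_lt ha

lemma eq_distortT (hT : ∀ F ∈ m0Set, T F ∈ m0Set) (hc : CommutesUF T) (hF : F ∈ m0Set) :
    T F = distortT (twoPointDF T) F := by
  ext x
  refine (rightLim_eq_of_tendsto ?_).symm
  refine tendsto_of_tendsto_of_tendsto_of_le_of_le' tendsto_const_nhds
    (((hT F hF).2.1 x).mono_left (nhdsWithin_mono x Ioi_subset_Ici_self)) ?_ ?_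
  · filter_upwards [self_mem_nhdsWithin] with y hy using apply_le_twoPointDF hT hc hF hy
  · exact Eventually.of_forall fun y => twoPointDF_le_apply hT hc hF y

end Commuting

/-- A map `T : M₀ → M₀` commutes with the utility transform `T^u` for every
utility function `u` if and only if `T = T_d` for some distortion function `d`
with additionally `d(0+) = 0` and `d(1-) = 1`. -/
theorem stmt8 (T : (ℝ → ℝ) → ℝ → ℝ) (hT : ∀ F ∈ m0Set, T F ∈ m0Set) :
    (∀ u : ℝ → ℝ, IsUF u → ∀ F ∈ m0Set, T (utilityT u F) = utilityT u (T F)) ↔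
      ∃ d : ℝ → ℝ, IsDFhat d ∧ ∀ F ∈ m0Set, T F = distortT d F := by
  constructor
  · intro hc
    exact ⟨twoPointDF T, twoPointDF_isDFhat hT hc, fun F hF => eq_distortT hT hc hF⟩
  · rintro ⟨d, hd, h⟩ u hu F hF
    have hH : distortT d F ∈ m0Set := h F hF ▸ hT F hF
    rw [h _ (utilityT_mem hu.2.measurable hF), h F hF]
    exact distort_commutes hd.1 hu hF hH
end
end

section
/- Let T : M₀ → M₀ be any mapping on the set of all probability distributions on ℝ. Then T commutes with the probability distortion T_d for every d ∈ F̂_D (i.e., every distortion function with d(0+)=0 and d(1−)=1) if and only if there exists a utility function u ∈ F_U (increasing and continuous) such that T = T^u. -/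
/-!
A distribution is determined by its quantiles, and both quantiles at a level `p ∈ (0, 1)` are
obtained by distortion: with `d = 𝟙_{[p, ∞)}` (resp. `d = 𝟙_{(p, ∞)}`) the distribution `T_d F` is
the point mass at the left (resp. right) `p`-quantile of `F` (`distortT_leftStep`,
`distortT_rightStep`).

Suppose `T` commutes with all distortions. Point masses are fixed by the distortion with
`d = 𝟙_{[1/2, ∞)}`, hence so are their images under `T`; but the range of this distortion
consists of point masses, so `T δ_x = δ_{u x}` for some function `u`. Commutation then says that
the quantiles of `T F` are the images under `u` of those of `F`. Applied to the logistic
distribution, whose quantile function is a bijection `(0, 1) → ℝ`, this shows that `u` is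
increasing, lower semicontinuous (left quantiles) and upper semicontinuous (right quantiles).
Comparing left quantiles gives `T F = T^u F`.

Conversely, for `u` increasing and continuous, `{y | u y ≤ x}` is empty, everything, or
`(-∞, a]`, so `T^u F x` is `0`, `1` or `F a` (`utilityT_trichotomy`). Continuity of `u` gives
`u z < y` for `z` slightly above `a` whenever `y > x`, so right limits of `d ∘ T^u F` at `x` are
right limits of `d ∘ F` at `a`; the conditions on `d` at `0+` and `1-` settle the other cases and
keep `T_d F` a distribution function.
-/

open MeasureTheory Filter Topology Set

noncomputable section

/-! ### Point masses and quantiles -/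

/-- The cdf of the point mass at `a`. -/
def ptMass (a : ℝ) : ℝ → ℝ := fun x => if a ≤ x then 1 else 0

/-- The step distortion `𝟙_{[p, ∞)}`. -/
def leftStep (p : ℝ) : ℝ → ℝ := fun x => if p ≤ x then 1 else 0

/-- The step distortion `𝟙_{(p, ∞)}`. -/
def rightStep (p : ℝ) : ℝ → ℝ := fun x => if p < x then 1 else 0

lemma m0_nonneg {F : ℝ → ℝ} (hF : F ∈ m0Set) (x : ℝ) : 0 ≤ F x :=
  hF.1.le_of_tendsto hF.2.2.1 x

lemma m0_le_one {F : ℝ → ℝ} (hF : F ∈ m0Set) (x : ℝ) : F x ≤ 1 :=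
  hF.1.ge_of_tendsto hF.2.2.2 x

lemma ptMass_injective : Function.Injective ptMass := by
  intro a b h
  have h1 := congrFun h a
  have h2 := congrFun h b
  simp only [ptMass, le_refl, if_true] at h1 h2
  apply le_antisymm
  · by_contra hc
    simp [hc] at h2
  · by_contra hc
    simp [hc] at h1

lemma ptMass_mem (a : ℝ) : ptMass a ∈ m0Set := by
  refine ⟨?_, ?_, ?_, ?_⟩
  · intro x y hxy
    unfold ptMass
    split_ifs <;> linarith
  · intro x
    by_cases h : a ≤ x
    · refine (continuousWithinAt_const (b := (1 : ℝ))).congr (fun y hy => ?_) ?_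
      · exact if_pos (h.trans hy)
      · exact if_pos h
    · push Not at h
      refine ContinuousAt.continuousWithinAt ?_
      refine (continuousAt_const (y := (0 : ℝ))).congr ?_
      filter_upwards [Iio_mem_nhds h] with y hy
      exact (if_neg (not_le.2 hy)).symm
  · refine tendsto_const_nhds.congr' ?_
    filter_upwards [eventually_lt_atBot a] with y hy
    exact (if_neg (not_le.2 hy)).symm
  · refine tendsto_const_nhds.congr' ?_
    filter_upwards [eventually_ge_atTop a] with y hy
    exact (if_pos hy).symm

lemma rightLim_eq_ptMass {f : ℝ → ℝ} {a : ℝ} (h0 : ∀ y < a, f y = 0) (h1 : ∀ y, a < y → f y = 1) :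
    Function.rightLim f = ptMass a := by
  funext x
  apply rightLim_eq_of_tendsto
  refine tendsto_const_nhds.congr' ?_
  by_cases h : a ≤ x
  · filter_upwards [self_mem_nhdsWithin] with y hy
    rw [h1 y (lt_of_le_of_lt h hy), ptMass, if_pos h]
  · filter_upwards [mem_nhdsWithin_of_mem_nhds (Iio_mem_nhds (not_le.1 h))] with y hy
    rw [h0 y hy, ptMass, if_neg h]

lemma isDFhat_leftStep {p : ℝ} (hp : p ∈ Ioo (0 : ℝ) 1) : IsDFhat (leftStep p) := by
  refine ⟨⟨?_, ?_, ?_⟩, ?_, ?_⟩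
  · intro x _ y _ hxy
    unfold leftStep
    split_ifs <;> linarith
  · exact if_neg (not_le.2 hp.1)
  · exact if_pos hp.2.le
  · refine tendsto_const_nhds.congr' ?_
    filter_upwards [mem_nhdsWithin_of_mem_nhds (Iio_mem_nhds hp.1)] with y hy
    exact (if_neg (not_le.2 hy)).symm
  · refine tendsto_const_nhds.congr' ?_
    filter_upwards [mem_nhdsWithin_of_mem_nhds (Ioi_mem_nhds hp.2)] with y hy
    exact (if_pos (le_of_lt hy)).symm

lemma isDFhat_rightStep {p : ℝ} (hp : p ∈ Ioo (0 : ℝ) 1) : IsDFhat (rightStep p) := by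
  refine ⟨⟨?_, ?_, ?_⟩, ?_, ?_⟩
  · intro x _ y _ hxy
    unfold rightStep
    split_ifs <;> linarith
  · exact if_neg (not_lt.2 hp.1.le)
  · exact if_pos hp.2
  · refine tendsto_const_nhds.congr' ?_
    filter_upwards [mem_nhdsWithin_of_mem_nhds (Iio_mem_nhds hp.1)] with y hy
    exact (if_neg (not_lt.2 (le_of_lt hy))).symm
  · refine tendsto_const_nhds.congr' ?_
    filter_upwards [mem_nhdsWithin_of_mem_nhds (Ioi_mem_nhds hp.2)] with y hy
    exact (if_pos hy).symm

/-- The sets whose infima define the quantiles at a level `p < 1` are nonempty. -/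
lemma exists_lt_of_m0 {F : ℝ → ℝ} (hF : F ∈ m0Set) {p : ℝ} (hp : p < 1) : ∃ x, p < F x :=
  (hF.2.2.2.eventually (lt_mem_nhds hp)).exists

/-- The sets whose infima define the quantiles at a level `p > 0` are bounded below. -/
lemma bddBelow_of_m0 {F : ℝ → ℝ} (hF : F ∈ m0Set) {p : ℝ} (hp : 0 < p) :
    BddBelow {x | p ≤ F x} := by
  obtain ⟨a, ha⟩ := (hF.2.2.1.eventually (gt_mem_nhds hp)).exists
  refine ⟨a, fun x hx => ?_⟩
  by_contra hc
  have := hF.1 (not_le.1 hc).le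
  have hx' : p ≤ F x := hx
  linarith

/-- The Galois connection between a cdf and its left quantile function. -/
lemma leftQ_le_iff {F : ℝ → ℝ} (hF : F ∈ m0Set) {p : ℝ} (hp : p ∈ Ioo (0 : ℝ) 1) (x : ℝ) :
    leftQ F p ≤ x ↔ p ≤ F x := by
  constructor
  · intro h
    have hgt : ∀ y ∈ Ioi x, p ≤ F y := by
      intro y hy
      obtain ⟨x₀, hx₀⟩ := exists_lt_of_m0 hF hp.2
      obtain ⟨z, hz, hzy⟩ := exists_lt_of_csInf_lt (s := {x | p ≤ F x}) ⟨x₀, hx₀.le⟩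
        (lt_of_le_of_lt h hy)
      exact le_trans hz (hF.1 hzy.le)
    have ht : Tendsto F (𝓝[>] x) (𝓝 (F x)) := (hF.2.1 x).mono Ioi_subset_Ici_self
    exact ge_of_tendsto ht (by filter_upwards [self_mem_nhdsWithin] with y hy using hgt y hy)
  · intro h
    exact csInf_le (bddBelow_of_m0 hF hp.1) h

lemma le_rightQ_iff {F : ℝ → ℝ} (hF : F ∈ m0Set) {p : ℝ} (hp : p ∈ Ioo (0 : ℝ) 1) (t : ℝ) :
    t ≤ rightQ F p ↔ ∀ y < t, F y ≤ p := by
  constructor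
  · intro h y hy
    by_contra hc
    have hb : BddBelow {x | p < F x} :=
      (bddBelow_of_m0 hF hp.1).mono fun x (hx : p < F x) => hx.le
    have : rightQ F p ≤ y := csInf_le hb (not_le.1 hc)
    linarith
  · intro h
    refine le_csInf (exists_lt_of_m0 hF hp.2) fun x (hx : p < F x) => ?_
    by_contra hc
    exact absurd (h x (not_le.1 hc)) (not_le.2 hx)

lemma distortT_leftStep {F : ℝ → ℝ} (hF : F ∈ m0Set) {p : ℝ} (hp : p ∈ Ioo (0 : ℝ) 1) :
    distortT (leftStep p) F = ptMass (leftQ F p) := by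
  apply rightLim_eq_ptMass
  · intro y hy
    exact if_neg fun h => not_le.2 hy ((leftQ_le_iff hF hp y).2 h)
  · intro y hy
    exact if_pos ((leftQ_le_iff hF hp y).1 hy.le)

lemma distortT_rightStep {F : ℝ → ℝ} (hF : F ∈ m0Set) {p : ℝ} (hp : p ∈ Ioo (0 : ℝ) 1) :
    distortT (rightStep p) F = ptMass (rightQ F p) := by
  apply rightLim_eq_ptMass
  · intro y hy
    exact if_neg (not_lt.2 ((le_rightQ_iff hF hp _).1 le_rfl y hy))
  · intro y hy
    refine if_pos ?_
    by_contra hc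
    refine absurd ((le_rightQ_iff hF hp y).2 fun z hz => ?_) (not_le.2 hy)
    exact (hF.1 hz.le).trans (not_lt.1 hc)

lemma leftQ_ptMass (a : ℝ) {p : ℝ} (hp : p ∈ Ioo (0 : ℝ) 1) : leftQ (ptMass a) p = a := by
  refine eq_of_forall_ge_iff fun x => ?_
  rw [leftQ_le_iff (ptMass_mem a) hp]
  unfold ptMass
  split_ifs with h
  · simp [h, hp.2.le]
  · simp [h, hp.1]

lemma sigmoid_mem_Ioo (x : ℝ) : Real.sigmoid x ∈ Ioo (0 : ℝ) 1 :=
  ⟨Real.sigmoid_pos x, Real.sigmoid_lt_one x⟩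

lemma leftQ_sigmoid (x : ℝ) : leftQ Real.sigmoid (Real.sigmoid x) = x := by
  simp only [leftQ, Real.sigmoid_le_iff]
  exact csInf_Ici

lemma rightQ_sigmoid (x : ℝ) : rightQ Real.sigmoid (Real.sigmoid x) = x := by
  simp only [rightQ, Real.sigmoid_lt_iff]
  exact csInf_Ioi

/-! ### The utility transform -/

lemma closed_lower_trichotomy {u : ℝ → ℝ} (hu : IsUF u) (x : ℝ) :
    (∀ y, x < u y) ∨ (∀ y, u y ≤ x) ∨ ∃ a, ∀ y, u y ≤ x ↔ y ≤ a := by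
  by_cases h0 : ∀ y, x < u y
  · exact Or.inl h0
  by_cases h1 : ∀ y, u y ≤ x
  · exact Or.inr (Or.inl h1)
  right; right
  push Not at h0 h1
  obtain ⟨y₀, hy₀⟩ := h0
  obtain ⟨y₁, hy₁⟩ := h1
  have hb : BddAbove {y | u y ≤ x} := by
    refine ⟨y₁, fun y (hy : u y ≤ x) => ?_⟩
    by_contra hc
    have := hu.1 (not_le.1 hc).le
    linarith
  have hc : IsClosed {y | u y ≤ x} := isClosed_le hu.2 continuous_const
  have hm : u (sSup {y | u y ≤ x}) ≤ x := hc.csSup_mem ⟨y₀, hy₀⟩ hb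
  exact ⟨sSup {y | u y ≤ x}, fun y => ⟨fun hy => le_csSup hb hy, fun hy => (hu.1 hy).trans hm⟩⟩

lemma utilityT_trichotomy {u F : ℝ → ℝ} (hu : IsUF u) (hF : F ∈ m0Set) (x : ℝ) :
    ((∀ y, x < u y) → utilityT u F x = 0) ∧ ((∀ y, u y ≤ x) → utilityT u F x = 1) ∧
      ∀ a, (∀ y, u y ≤ x ↔ y ≤ a) → utilityT u F x = F a := by
  have hd : utilityT u F x =
      ((StieltjesFunction.measure ⟨F, hF.1, hF.2.1⟩) (u ⁻¹' Iic x)).toReal := by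
    have hh : Monotone F ∧ ∀ x, ContinuousWithinAt F (Set.Ici x) x := ⟨hF.1, hF.2.1⟩
    rw [utilityT, dif_pos hh, Measure.map_apply hu.2.measurable measurableSet_Iic]
  rw [hd]
  refine ⟨fun h => ?_, fun h => ?_, fun a h => ?_⟩
  · have : u ⁻¹' Iic x = ∅ := by
      ext y; simpa using h y
    simp [this]
  · have : u ⁻¹' Iic x = univ := by
      ext y; simpa using h y
    rw [this, StieltjesFunction.measure_univ _ hF.2.2.1 hF.2.2.2]
    simp
  · have : u ⁻¹' Iic x = Iic a := by
      ext y; simpa using h y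
    rw [this, StieltjesFunction.measure_Iic _ hF.2.2.1]
    simpa using m0_nonneg hF a

lemma utilityT_mem_Icc {u F : ℝ → ℝ} (hu : IsUF u) (hF : F ∈ m0Set) (x : ℝ) :
    utilityT u F x ∈ Icc (0 : ℝ) 1 := by
  obtain ⟨t0, t1, t2⟩ := utilityT_trichotomy hu hF x
  rcases closed_lower_trichotomy hu x with h | h | ⟨a, h⟩
  · simp [t0 h]
  · simp [t1 h]
  · rw [t2 a h]
    exact ⟨m0_nonneg hF a, m0_le_one hF a⟩

lemma le_utilityT {u F : ℝ → ℝ} (hu : IsUF u) (hF : F ∈ m0Set) {y z : ℝ} (h : u z ≤ y) :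
    F z ≤ utilityT u F y := by
  obtain ⟨t0, t1, t2⟩ := utilityT_trichotomy hu hF y
  rcases closed_lower_trichotomy hu y with h' | h' | ⟨a, h'⟩
  · exact absurd h (not_le.2 (h' z))
  · rw [t1 h']
    exact m0_le_one hF z
  · rw [t2 a h']
    exact hF.1 ((h' z).1 h)

lemma utilityT_le {u F : ℝ → ℝ} (hu : IsUF u) (hF : F ∈ m0Set) {y z : ℝ} (h : y < u z) :
    utilityT u F y ≤ F z := by
  obtain ⟨t0, t1, t2⟩ := utilityT_trichotomy hu hF y
  rcases closed_lower_trichotomy hu y with h' | h' | ⟨a, h'⟩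
  · rw [t0 h']
    exact m0_nonneg hF z
  · exact absurd h (not_lt.2 (h' z))
  · rw [t2 a h']
    exact hF.1 (not_le.1 fun hc => not_le.2 h ((h' z).2 hc)).le

/-! ### Utility transforms commute with distortions -/

lemma monotone_comp_of_df {d F : ℝ → ℝ} (hd : IsDFhat d) (hF : F ∈ m0Set) : Monotone (d ∘ F) :=
  fun x y hxy => hd.1.1 ⟨m0_nonneg hF x, m0_le_one hF x⟩ ⟨m0_nonneg hF y, m0_le_one hF y⟩
    (hF.1 hxy)

lemma df_mem_Icc {d : ℝ → ℝ} (hd : IsDFhat d) {p : ℝ} (hp : p ∈ Icc (0 : ℝ) 1) :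
    d p ∈ Icc (0 : ℝ) 1 := by
  constructor
  · have := hd.1.1 (left_mem_Icc.2 zero_le_one) hp hp.1
    rwa [hd.1.2.1] at this
  · have := hd.1.1 hp (right_mem_Icc.2 zero_le_one) hp.2
    rwa [hd.1.2.2] at this

lemma tendsto_comp_atBot {d F : ℝ → ℝ} (hd : IsDFhat d) (hF : F ∈ m0Set) :
    Tendsto (d ∘ F) atBot (𝓝 0) := by
  have h : Tendsto d (𝓝[≥] (0 : ℝ)) (𝓝 0) := by
    have h1 : ContinuousWithinAt d (Ioi 0) 0 := by
      rw [ContinuousWithinAt, hd.1.2.1]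
      exact hd.2.1
    have := continuousWithinAt_Ioi_iff_Ici.1 h1
    rwa [ContinuousWithinAt, hd.1.2.1] at this
  exact h.comp (tendsto_nhdsWithin_iff.2 ⟨hF.2.2.1, Eventually.of_forall (m0_nonneg hF)⟩)

lemma tendsto_comp_atTop {d F : ℝ → ℝ} (hd : IsDFhat d) (hF : F ∈ m0Set) :
    Tendsto (d ∘ F) atTop (𝓝 1) := by
  have h : Tendsto d (𝓝[≤] (1 : ℝ)) (𝓝 1) := by
    have h1 : ContinuousWithinAt d (Iio 1) 1 := by
      rw [ContinuousWithinAt, hd.1.2.2]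
      exact hd.2.2
    have := continuousWithinAt_Iio_iff_Iic.1 h1
    rwa [ContinuousWithinAt, hd.1.2.2] at this
  exact h.comp (tendsto_nhdsWithin_iff.2 ⟨hF.2.2.2, Eventually.of_forall (m0_le_one hF)⟩)

lemma distortT_mem {d F : ℝ → ℝ} (hd : IsDFhat d) (hF : F ∈ m0Set) : distortT d F ∈ m0Set := by
  have hm := monotone_comp_of_df hd hF
  exact ⟨hm.rightLim, hm.stieltjesFunction.right_continuous',
    tendsto_rightLim_atBot_of_tendsto (tendsto_comp_atBot hd hF),
    tendsto_rightLim_atTop_of_tendsto (tendsto_comp_atTop hd hF)⟩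

lemma utilityT_distortT {u d F : ℝ → ℝ} (hu : IsUF u) (hd : IsDFhat d) (hF : F ∈ m0Set) :
    utilityT u (distortT d F) = distortT d (utilityT u F) := by
  have hm := monotone_comp_of_df hd hF
  have hup : ∀ {y z}, y < u z → d (utilityT u F y) ≤ d (F z) := fun {y z} h =>
    hd.1.1 (utilityT_mem_Icc hu hF y) ⟨m0_nonneg hF z, m0_le_one hF z⟩ (utilityT_le hu hF h)
  have hlow : ∀ {y z}, u z ≤ y → d (F z) ≤ d (utilityT u F y) := fun {y z} h =>
    hd.1.1 ⟨m0_nonneg hF z, m0_le_one hF z⟩ (utilityT_mem_Icc hu hF y) (le_utilityT hu hF h)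
  funext x
  symm
  apply rightLim_eq_of_tendsto
  obtain ⟨t0, t1, t2⟩ := utilityT_trichotomy hu (distortT_mem hd hF) x
  rcases closed_lower_trichotomy hu x with h | h | ⟨a, h⟩
  · rw [t0 h]
    refine tendsto_order.2 ⟨fun c hc => Eventually.of_forall fun y =>
      lt_of_lt_of_le hc (df_mem_Icc hd (utilityT_mem_Icc hu hF y)).1, fun c hc => ?_⟩
    obtain ⟨b, hb⟩ := ((tendsto_comp_atBot hd hF).eventually (gt_mem_nhds hc)).exists
    filter_upwards [mem_nhdsWithin_of_mem_nhds (Iio_mem_nhds (h b))] with y hy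
    exact lt_of_le_of_lt (hup hy) hb
  · rw [t1 h]
    refine tendsto_const_nhds.congr' ?_
    filter_upwards [self_mem_nhdsWithin] with y hy
    have := (utilityT_trichotomy hu hF y).2.1 fun z => (h z).trans (le_of_lt hy)
    simp [this, hd.1.2.2]
  · rw [t2 a h]
    refine tendsto_order.2 ⟨fun c hc => ?_, fun c hc => ?_⟩
    · filter_upwards [self_mem_nhdsWithin] with y hy
      -- continuity of `u` provides `z > a` with `u z` still below `y`
      have hlt : u a < y := lt_of_le_of_lt ((h a).2 le_rfl) hy
      have he : ∀ᶠ z in 𝓝[>] a, u z < y :=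
        (hu.2.continuousAt.eventually (gt_mem_nhds hlt)).filter_mono nhdsWithin_le_nhds
      obtain ⟨z, hz, hza⟩ := (he.and self_mem_nhdsWithin).exists
      exact lt_of_lt_of_le hc ((hm.rightLim_le hza).trans (hlow hz.le))
    · obtain ⟨b, hb, hba⟩ := (((hm.tendsto_rightLim a).eventually (gt_mem_nhds hc)).and
        self_mem_nhdsWithin).exists
      have hxb : x < u b := not_le.1 fun hc => not_le.2 hba ((h b).1 hc)
      filter_upwards [mem_nhdsWithin_of_mem_nhds (Iio_mem_nhds hxb)] with y hy
      exact lt_of_le_of_lt (hup hy) hb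

/-! ### Maps commuting with distortions are utility transforms -/

lemma eq_of_forall_Ioo_le_iff {a b : ℝ} (ha : a ∈ Icc (0 : ℝ) 1) (hb : b ∈ Icc (0 : ℝ) 1)
    (h : ∀ p ∈ Ioo (0 : ℝ) 1, p ≤ a ↔ p ≤ b) : a = b := by
  have key : ∀ {a b : ℝ}, a ∈ Icc (0 : ℝ) 1 → b ∈ Icc (0 : ℝ) 1 →
      (∀ p ∈ Ioo (0 : ℝ) 1, p ≤ a ↔ p ≤ b) → a ≤ b := by
    intro a b ha hb h
    by_contra hc
    push Not at hc
    have := (h ((a + b) / 2) ⟨by linarith [hb.1], by linarith [ha.2]⟩).1 (by linarith)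
    linarith
  exact le_antisymm (key ha hb h) (key hb ha fun p hp => (h p hp).symm)

lemma exists_utility {T : (ℝ → ℝ) → ℝ → ℝ} (hT : ∀ F ∈ m0Set, T F ∈ m0Set)
    (hc : ∀ d : ℝ → ℝ, IsDFhat d → ∀ F ∈ m0Set, T (distortT d F) = distortT d (T F)) :
    ∃ u : ℝ → ℝ, IsUF u ∧ ∀ F ∈ m0Set, T F = utilityT u F := by
  have half : (1 / 2 : ℝ) ∈ Ioo (0 : ℝ) 1 := by constructor <;> norm_num
  obtain ⟨u, hu⟩ : ∃ u : ℝ → ℝ, ∀ x, T (ptMass x) = ptMass (u x) := by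
    refine ⟨fun x => leftQ (T (ptMass x)) (1 / 2), fun x => ?_⟩
    have h := hc _ (isDFhat_leftStep half) _ (ptMass_mem x)
    rwa [distortT_leftStep (ptMass_mem x) half, leftQ_ptMass x half,
      distortT_leftStep (hT _ (ptMass_mem x)) half] at h
  have hL : ∀ F ∈ m0Set, ∀ p ∈ Ioo (0 : ℝ) 1, u (leftQ F p) = leftQ (T F) p := by
    intro F hF p hp
    have h := hc _ (isDFhat_leftStep hp) F hF
    rw [distortT_leftStep hF hp, hu, distortT_leftStep (hT F hF) hp] at h
    exact ptMass_injective h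
  have hR : ∀ F ∈ m0Set, ∀ p ∈ Ioo (0 : ℝ) 1, u (rightQ F p) = rightQ (T F) p := by
    intro F hF p hp
    have h := hc _ (isDFhat_rightStep hp) F hF
    rw [distortT_rightStep hF hp, hu, distortT_rightStep (hT F hF) hp] at h
    exact ptMass_injective h
  have hG := hT _ sigmoid_mem
  have hle : ∀ x t, u x ≤ t ↔ Real.sigmoid x ≤ T Real.sigmoid t := by
    intro x t
    have h := hL _ sigmoid_mem _ (sigmoid_mem_Ioo x)
    rw [leftQ_sigmoid] at h
    rw [h, leftQ_le_iff hG (sigmoid_mem_Ioo x)]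
  have hge : ∀ x t, t ≤ u x ↔ ∀ y < t, T Real.sigmoid y ≤ Real.sigmoid x := by
    intro x t
    have h := hR _ sigmoid_mem _ (sigmoid_mem_Ioo x)
    rw [rightQ_sigmoid] at h
    rw [h, le_rightQ_iff hG (sigmoid_mem_Ioo x)]
  have hUF : IsUF u := by
    refine ⟨fun x y hxy => ?_, ?_⟩
    · exact (hle x _).2 ((Real.sigmoid_le hxy).trans ((hle y _).1 le_rfl))
    · refine continuous_iff_lower_upperSemicontinuous.2
        ⟨lowerSemicontinuous_iff_isClosed_preimage.2 fun t => ?_,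
          upperSemicontinuous_iff_isClosed_preimage.2 fun t => ?_⟩
      · have : u ⁻¹' Iic t = {x | Real.sigmoid x ≤ T Real.sigmoid t} := by
          ext x; exact hle x t
        rw [this]
        exact isClosed_le continuous_sigmoid continuous_const
      · have : u ⁻¹' Ici t = ⋂ y, ⋂ _ : y < t, {x | T Real.sigmoid y ≤ Real.sigmoid x} := by
          ext x; simpa using hge x t
        rw [this]
        exact isClosed_iInter fun y => isClosed_iInter fun _ =>
          isClosed_le continuous_const continuous_sigmoid
  refine ⟨u, hUF, fun F hF => ?_⟩
  funext t
  have hTF := hT F hF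
  refine eq_of_forall_Ioo_le_iff ⟨m0_nonneg hTF t, m0_le_one hTF t⟩ (utilityT_mem_Icc hUF hF t)
    fun p hp => ?_
  rw [← leftQ_le_iff hTF hp, ← hL F hF p hp]
  obtain ⟨t0, t1, t2⟩ := utilityT_trichotomy hUF hF t
  rcases closed_lower_trichotomy hUF t with h | h | ⟨a, h⟩
  · rw [t0 h]
    exact iff_of_false (not_le.2 (h _)) (not_le.2 hp.1)
  · rw [t1 h]
    exact iff_of_true (h _) hp.2.le
  · rw [t2 a h, h, leftQ_le_iff hF hp]

/-- A map `T : M₀ → M₀` commutes with the probability distortion `T_d` for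
every `d ∈ F̂_D` (distortion function with `d(0+) = 0`, `d(1-) = 1`) if and only
if `T = T^u` for some utility function `u` (increasing and continuous). -/
theorem stmt9 (T : (ℝ → ℝ) → ℝ → ℝ) (hT : ∀ F ∈ m0Set, T F ∈ m0Set) :
    (∀ d : ℝ → ℝ, IsDFhat d → ∀ F ∈ m0Set, T (distortT d F) = distortT d (T F)) ↔
      ∃ u : ℝ → ℝ, IsUF u ∧ ∀ F ∈ m0Set, T F = utilityT u F := by
  refine ⟨exists_utility hT, ?_⟩
  rintro ⟨u, hu, h⟩ d hd F hF
  rw [h _ (distortT_mem hd hF), h F hF]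
  exact utilityT_distortT hu hd hF
end
end
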